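/- Let a_{12}, a_{23}, a_{31} be nonzero real numbers with a_{12}a_{23} + a_{23}a_{31} + a_{31}a_{12} ≠ 0, and define the star-triangle map by τ_i a_{jk} = -a_{jk} / (a_{12}a_{23} + a_{23}a_{31} + a_{31}a_{12}) for each permutation. Then for vectors f, f_1, f_2, f_3 in ℝ^N, if f_{ij} is defined for each pair i≠j by the discrete Moutard equation f_{ij} = f + a_{ij}(f_j − f_i) (with a_{ji} = −a_{ij}), the three values of f_{123} computed from the three equations f_{123} = f_i + (τ_i a_{jk})(f_{ik} − f_{ij}) all coincide. -/

import Mathlib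

/-- 4D-style consistency of the star-triangle map for T-nets: the three values of
`f₁₂₃` computed from the three discrete Moutard equations coincide. -/
theorem star_triangle_moutard_consistency
    (N : ℕ) (a12 a23 a31 : ℝ)
    (h12 : a12 ≠ 0) (h23 : a23 ≠ 0) (h31 : a31 ≠ 0)
    (hs : a12 * a23 + a23 * a31 + a31 * a12 ≠ 0)
    (f f1 f2 f3 f12 f23 f13 : Fin N → ℝ)
    (hf12 : f12 = f + a12 • (f2 - f1))
    (hf23 : f23 = f + a23 • (f3 - f2))
    (hf13 : f13 = f + (-a31) • (f3 - f1)) :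
    f1 + (-a23 / (a12 * a23 + a23 * a31 + a31 * a12)) • (f13 - f12)
      = f2 + (-a31 / (a12 * a23 + a23 * a31 + a31 * a12)) • (f12 - f23) ∧
    f2 + (-a31 / (a12 * a23 + a23 * a31 + a31 * a12)) • (f12 - f23)
      = f3 + (-a12 / (a12 * a23 + a23 * a31 + a31 * a12)) • (f23 - f13) := by
  subst hf12 hf23 hf13
  constructor
  all_goals
    funext i
    simp only [Pi.add_apply, Pi.sub_apply, Pi.smul_apply, smul_eq_mul]
    generalize hS : a12 * a23 + a23 * a31 + a31 * a12 = S at hs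
    field_simp
    rw [← hS]
    ring
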